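/- arXiv:2208.08324 — 2 statements merged into one kernel-verified Lean document; each statement's English description precedes it below -/
import Mathlib

section
/- Let μ be a nonzero measure on a measurable space X, let λ > 0, τ ∈ ℝ, and let u : (0,∞) × X → ℝ be measurable. Set C := ∫_X exp(−λ·û_τ(x)) dμ(x). If C < ∞, then C > 0, for every t > 0 one has ∫_X exp(−λ·u(t,x)) dμ(x) ≤ C·e^{−λτt}, and consequently liminf_{t→∞} −(1/(λt))·log ∫_X exp(−λ·u(t,·)) dμ ≥ τ. -/
open MeasureTheory Filter Set

/-- `exp(-λ·a)` for `a ∈ [-∞,∞)`, valued in `[0,∞]`, with the convention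
`exp(-λ·(-∞)) = +∞`. -/
noncomputable def expNegE (lam : ℝ) (a : EReal) : ENNReal :=
  if a = ⊥ then ⊤ else ENNReal.ofReal (Real.exp (-lam * a.toReal))

/-- The Legendre transform `û_τ(x) = inf_{t>0} (u(t,x) − τ·t)`, valued in `[−∞,∞)`. -/
noncomputable def legendreT {X : Type*} (u : ℝ → X → ℝ) (τ : ℝ) (x : X) : EReal :=
  ⨅ (t : ℝ) (_ : 0 < t), ((u t x - τ * t : ℝ) : EReal)

/-!
For each `t > 0`, the infimum `û_τ ≤ u(t,·) - τt` gives the pointwise bound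
`exp(-λ·u(t,·)) ≤ exp(-λ·û_τ)·e^{-λτt}`, which is integrated over `X`. Since `exp(-λ·u(t,·))` is
positive and `μ ≠ 0`, the left integral is positive, and hence so is `C`. Taking logarithms,
`-(1/(λt))·log ∫ exp(-λ·u(t,·)) dμ ≥ τ - log C/(λt)`, whose right-hand side tends to `τ`.
-/

theorem lintegral_pos_of_ae_pos {X : Type*} [MeasurableSpace X] {μ : Measure X} (hμ : μ ≠ 0)
    {f : X → ENNReal} (hf : AEMeasurable f μ) (hpos : ∀ᵐ x ∂μ, 0 < f x) :
    0 < ∫⁻ x, f x ∂μ := by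
  refine pos_iff_ne_zero.mpr fun hint => hμ ?_
  have hzero : f =ᵐ[μ] 0 := (lintegral_eq_zero_iff' hf).mp hint
  have hfalse : ∀ᵐ _ ∂μ, False := by
    filter_upwards [hzero, hpos] with x hx0 hxpos using hxpos.ne' hx0
  exact ae_eq_bot.mp (eventually_false_iff_eq_bot.mp hfalse)

section ExponentialDecay

variable {lam τ : ℝ}

theorem sub_log_div_le_neg_one_div_mul_log {C c y : ℝ} (hc : 0 < c) (hy : 0 < y)
    (hyC : y ≤ C * Real.exp (-(c * τ))) :
    τ - Real.log C / c ≤ -(1 / c) * Real.log y := by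
  have hC : 0 < C := pos_of_mul_pos_left (hy.trans_le hyC) (Real.exp_pos _).le
  have hlog : Real.log y ≤ Real.log C - c * τ := by
    calc Real.log y ≤ Real.log (C * Real.exp (-(c * τ))) := Real.log_le_log hy hyC
      _ = Real.log C - c * τ := by
        rw [Real.log_mul hC.ne' (Real.exp_ne_zero _), Real.log_exp, sub_eq_add_neg]
  calc τ - Real.log C / c = -(1 / c) * (Real.log C - c * τ) := by field_simp; ring
    _ ≤ -(1 / c) * Real.log y :=
      mul_le_mul_of_nonpos_left hlog (neg_nonpos.mpr (one_div_pos.mpr hc).le)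

theorem tendsto_sub_div_const_mul_atTop (hlam : 0 < lam) (a b : ℝ) :
    Tendsto (fun t : ℝ => a - b / (lam * t)) atTop (nhds a) := by
  have hdiv : Tendsto (fun t : ℝ => b / (lam * t)) atTop (nhds 0) :=
    tendsto_const_nhds.div_atTop (tendsto_id.const_mul_atTop hlam)
  simpa only [sub_zero] using tendsto_const_nhds.sub hdiv

theorem le_liminf_neg_log_of_le_mul_exp {C : ℝ} {f : ℝ → ℝ} (hlam : 0 < lam)
    (hpos : ∀ᶠ t in atTop, 0 < f t)
    (hle : ∀ᶠ t in atTop, f t ≤ C * Real.exp (-(lam * τ * t))) :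
    (τ : EReal) ≤
      liminf (fun t : ℝ => ((-(1 / (lam * t)) * Real.log (f t) : ℝ) : EReal)) atTop := by
  have hlim : Tendsto (fun t : ℝ => ((τ - Real.log C / (lam * t) : ℝ) : EReal)) atTop
      (nhds (τ : EReal)) :=
    EReal.tendsto_coe.mpr (tendsto_sub_div_const_mul_atTop hlam τ (Real.log C))
  rw [← hlim.liminf_eq]
  refine liminf_le_liminf ?_
  filter_upwards [eventually_gt_atTop 0, hpos, hle] with t ht hft hftC
  rw [mul_right_comm] at hftC
  exact EReal.coe_le_coe_iff.mpr
    (sub_log_div_le_neg_one_div_mul_log (mul_pos hlam ht) hft hftC)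

theorem le_liminf_neg_log_toReal_of_le_mul_exp {C : ENNReal} {f : ℝ → ENNReal} (hlam : 0 < lam)
    (hC : C ≠ ⊤) (hpos : ∀ᶠ t in atTop, 0 < f t)
    (hle : ∀ᶠ t in atTop, f t ≤ C * ENNReal.ofReal (Real.exp (-(lam * τ * t)))) :
    (τ : EReal) ≤
      liminf (fun t : ℝ => ((-(1 / (lam * t)) * Real.log (f t).toReal : ℝ) : EReal)) atTop := by
  have hne_top (t : ℝ) : C * ENNReal.ofReal (Real.exp (-(lam * τ * t))) ≠ ⊤ :=
    ENNReal.mul_ne_top hC ENNReal.ofReal_ne_top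
  refine le_liminf_neg_log_of_le_mul_exp (C := C.toReal) hlam ?_ ?_
  · filter_upwards [hpos, hle] with t hft hftC
    exact ENNReal.toReal_pos hft.ne' (ne_top_of_le_ne_top (hne_top t) hftC)
  · filter_upwards [hle] with t hftC
    simpa only [ENNReal.toReal_mul, ENNReal.toReal_ofReal (Real.exp_pos _).le] using
      ENNReal.toReal_mono (hne_top t) hftC

end ExponentialDecay

section LegendreTransform

theorem expNegE_coe (lam a : ℝ) :
    expNegE lam (a : EReal) = ENNReal.ofReal (Real.exp (-lam * a)) := by
  rw [expNegE, if_neg (EReal.coe_ne_bot a), EReal.toReal_coe]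

variable {X : Type*} {lam : ℝ} (τ : ℝ) (u : ℝ → X → ℝ) {t : ℝ}

-- The point `⊤` is excluded because `EReal.toReal ⊤ = 0` makes `expNegE lam ⊤ = 1`.
theorem antitoneOn_expNegE (hlam : 0 ≤ lam) : AntitoneOn (expNegE lam) (Iio ⊤) := by
  intro a _ b hb hab
  by_cases ha : a = ⊥
  · rw [expNegE.eq_def lam a, if_pos ha]
    exact le_top
  · have hb_bot : b ≠ ⊥ := ne_bot_of_le_ne_bot ha hab
    have htoReal : a.toReal ≤ b.toReal := EReal.toReal_le_toReal hab ha hb.ne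
    rw [expNegE, expNegE, if_neg ha, if_neg hb_bot]
    exact ENNReal.ofReal_le_ofReal <| Real.exp_le_exp.mpr <|
      mul_le_mul_of_nonpos_left htoReal (neg_nonpos.mpr hlam)

theorem legendreT_le (ht : 0 < t) (x : X) :
    legendreT u τ x ≤ ((u t x - τ * t : ℝ) : EReal) :=
  iInf₂_le t ht

theorem ofReal_exp_le_expNegE_legendreT_mul (hlam : 0 ≤ lam) (ht : 0 < t) (x : X) :
    ENNReal.ofReal (Real.exp (-lam * u t x)) ≤
      expNegE lam (legendreT u τ x) * ENNReal.ofReal (Real.exp (-(lam * τ * t))) := by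
  have hle := legendreT_le τ u ht x
  have hlt : ((u t x - τ * t : ℝ) : EReal) < ⊤ := EReal.coe_lt_top _
  calc ENNReal.ofReal (Real.exp (-lam * u t x))
      = expNegE lam ((u t x - τ * t : ℝ) : EReal) *
          ENNReal.ofReal (Real.exp (-(lam * τ * t))) := by
        rw [expNegE_coe, ← ENNReal.ofReal_mul (Real.exp_pos _).le, ← Real.exp_add]
        ring_nf
    _ ≤ _ := by gcongr; exact antitoneOn_expNegE hlam (hle.trans_lt hlt) hlt hle

variable [MeasurableSpace X] (μ : Measure X)

theorem lintegral_ofReal_exp_le_lintegral_expNegE_legendreT_mul (hlam : 0 ≤ lam) (ht : 0 < t) :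
    (∫⁻ x, ENNReal.ofReal (Real.exp (-lam * u t x)) ∂μ) ≤
      (∫⁻ x, expNegE lam (legendreT u τ x) ∂μ) *
        ENNReal.ofReal (Real.exp (-(lam * τ * t))) := by
  rw [← lintegral_mul_const' _ _ ENNReal.ofReal_ne_top]
  exact lintegral_mono fun x => ofReal_exp_le_expNegE_legendreT_mul τ u hlam ht x

end LegendreTransform

theorem stmt1_general {X : Type*} [MeasurableSpace X] (μ : Measure X) (hμ : μ ≠ 0)
    (lam τ : ℝ) (hlam : 0 < lam)
    (u : ℝ → X → ℝ) (hu : ∀ t, 0 < t → AEMeasurable (u t) μ)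
    (hC : (∫⁻ x, expNegE lam (legendreT u τ x) ∂μ) < ⊤) :
    0 < (∫⁻ x, expNegE lam (legendreT u τ x) ∂μ) ∧
    (∀ t : ℝ, 0 < t →
      (∫⁻ x, ENNReal.ofReal (Real.exp (-lam * u t x)) ∂μ) ≤
        (∫⁻ x, expNegE lam (legendreT u τ x) ∂μ) *
          ENNReal.ofReal (Real.exp (-(lam * τ * t)))) ∧
    (τ : EReal) ≤
      liminf (fun t : ℝ =>
          ((-(1 / (lam * t)) *
            Real.log ((∫⁻ x, ENNReal.ofReal (Real.exp (-lam * u t x)) ∂μ).toReal) : ℝ) : EReal))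
        atTop := by
  have hpos (t : ℝ) (ht : 0 < t) :
      0 < ∫⁻ x, ENNReal.ofReal (Real.exp (-lam * u t x)) ∂μ :=
    lintegral_pos_of_ae_pos hμ ((hu t ht).const_mul (-lam)).exp.ennreal_ofReal
      (.of_forall fun _ => ENNReal.ofReal_pos.mpr (Real.exp_pos _))
  have hbound (t : ℝ) (ht : 0 < t) :=
    lintegral_ofReal_exp_le_lintegral_expNegE_legendreT_mul τ u μ hlam.le ht
  have hC_pos : 0 < ∫⁻ x, expNegE lam (legendreT u τ x) ∂μ :=
    pos_of_mul_pos_left ((hpos 1 one_pos).trans_le (hbound 1 one_pos)) zero_le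
  exact ⟨hC_pos, hbound, le_liminf_neg_log_toReal_of_le_mul_exp hlam hC.ne
    ((eventually_gt_atTop 0).mono hpos) ((eventually_gt_atTop 0).mono hbound)⟩

/-- Let `μ` be a nonzero measure, `λ > 0`, `τ ∈ ℝ`, `u : (0,∞) × X → ℝ` measurable, and set
`C := ∫_X exp(−λ·û_τ) dμ`.  If `C < ∞` then `C > 0`, for every `t > 0` one has
`∫_X exp(−λ·u(t,·)) dμ ≤ C·e^{−λτt}`, and consequently
`liminf_{t→∞} −(1/(λt))·log ∫_X exp(−λ·u(t,·)) dμ ≥ τ`. -/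
theorem stmt1 {X : Type*} [MeasurableSpace X] (μ : Measure X) (hμ : μ ≠ 0)
    (lam τ : ℝ) (hlam : 0 < lam)
    (u : ℝ → X → ℝ) (hu : Measurable fun q : ℝ × X => u q.1 q.2)
    (hC : (∫⁻ x, expNegE lam (legendreT u τ x) ∂μ) < ⊤) :
    0 < (∫⁻ x, expNegE lam (legendreT u τ x) ∂μ) ∧
    (∀ t : ℝ, 0 < t →
      (∫⁻ x, ENNReal.ofReal (Real.exp (-lam * u t x)) ∂μ) ≤
        (∫⁻ x, expNegE lam (legendreT u τ x) ∂μ) *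
          ENNReal.ofReal (Real.exp (-(lam * τ * t)))) ∧
    (τ : EReal) ≤
      liminf (fun t : ℝ =>
          ((-(1 / (lam * t)) *
            Real.log ((∫⁻ x, ENNReal.ofReal (Real.exp (-lam * u t x)) ∂μ).toReal) : ℝ) : EReal))
        atTop :=
  stmt1_general μ hμ lam τ hlam u (fun _ _ => hu.of_uncurry_left.aemeasurable) hC
end

section
/- Let μ be a measure on a measurable space X, let λ > 0 and p ≤ 0 be real numbers, and let u : (0,∞) × X → ℝ be measurable such that for every x ∈ X the function t ↦ u(t,x) is nonincreasing. Then ∫_X exp(−λ·û_p(x)) dμ(x) ≤ e^{−λp} · ∫_{0}^{∞} e^{λpt} (∫_X exp(−λ·u(t,x)) dμ(x)) dt, all integrals being taken in [0,∞]. In particular, if the right-hand double integral is finite, then û_p(x) > −∞ for μ-almost every x and ∫_X exp(−λ·û_p) dμ < ∞. -/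
open MeasureTheory Filter Set

/-!
Fix `x` and `t > 0`. As `u(·,x)` is nonincreasing, `exp(-λu(s,x)) ≥ exp(-λu(t,x))` for `s > t`,
while a window of length one inside `(t,∞)` shows that `∫_t^∞ e^{λps} ds ≥ e^{λp(t+1)}`. Hence
`exp(-λ(u(t,x) - pt)) ≤ e^{-λp} ∫_0^∞ e^{λps} exp(-λu(s,x)) ds`. The right-hand side does not
depend on `t`, and taking the supremum over `t` turns the left-hand side into `exp(-λ û_p(x))`.
It remains to integrate over `x` and exchange the integrals. This is legitimate although `μ` is
arbitrary: if the right-hand side is finite, then `μ` has a positive integrable function, so it is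
s-finite.
-/

open scoped ENNReal

theorem sFinite_of_lintegral_ne_top {X : Type*} [MeasurableSpace X] {μ : Measure X} {f : X → ℝ≥0∞}
    (hf : AEMeasurable f μ) (hf_ne_zero : ∀ᵐ x ∂μ, f x ≠ 0) (hf_int : ∫⁻ x, f x ∂μ ≠ ∞) :
    SFinite μ :=
  have : IsFiniteMeasure (μ.withDensity f) := isFiniteMeasure_withDensity hf_int
  sFinite_of_absolutelyContinuous (withDensity_absolutelyContinuous' hf hf_ne_zero)

theorem lintegral_lintegral_le_swap_of_ne_zero {T X : Type*} [MeasurableSpace T]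
    [MeasurableSpace X] (ν : Measure T) [SFinite ν] (μ : Measure X) {f : T → X → ℝ≥0∞}
    (hf : Measurable (Function.uncurry f)) (hf_ne_zero : ∀ᵐ t ∂ν, ∀ᵐ x ∂μ, f t x ≠ 0) :
    ∫⁻ x, ∫⁻ t, f t x ∂ν ∂μ ≤ ∫⁻ t, ∫⁻ x, f t x ∂μ ∂ν := by
  by_cases h_fin : ∃ t, (∀ᵐ x ∂μ, f t x ≠ 0) ∧ ∫⁻ x, f t x ∂μ ≠ ∞
  · obtain ⟨t, ht_ne_zero, ht_int⟩ := h_fin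
    have : SFinite μ :=
      sFinite_of_lintegral_ne_top hf.of_uncurry_left.aemeasurable ht_ne_zero ht_int
    exact (lintegral_lintegral_swap hf.aemeasurable).ge
  · push Not at h_fin
    have h_top : ∫⁻ t, ∫⁻ x, f t x ∂μ ∂ν = ∫⁻ _, ∞ ∂ν :=
      lintegral_congr_ae (hf_ne_zero.mono h_fin)
    obtain rfl | hν := eq_or_ne ν 0
    · simp
    · simp [h_top, ENNReal.top_mul, hν]

theorem ofReal_exp_le_setLIntegral_Ioi (c t : ℝ) :
    ENNReal.ofReal (Real.exp (c * (t + 1))) ≤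
      ∫⁻ s in Ioi t, ENNReal.ofReal (Real.exp (c * s)) := by
  obtain ⟨b, hb, hbound⟩ :
      ∃ b, t ≤ b ∧ ∀ s ∈ Ioc b (b + 1), c * (t + 1) ≤ c * s := by
    obtain hc | hc := le_total c 0
    · exact ⟨t, le_rfl, fun s hs ↦ mul_le_mul_of_nonpos_left hs.2 hc⟩
    · exact ⟨t + 1, by linarith, fun s hs ↦ mul_le_mul_of_nonneg_left hs.1.le hc⟩
  calc ENNReal.ofReal (Real.exp (c * (t + 1)))
      = ∫⁻ _ in Ioc b (b + 1), ENNReal.ofReal (Real.exp (c * (t + 1))) := by simp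
    _ ≤ ∫⁻ s in Ioc b (b + 1), ENNReal.ofReal (Real.exp (c * s)) :=
        setLIntegral_mono' measurableSet_Ioc fun s hs ↦
          ENNReal.ofReal_le_ofReal (Real.exp_le_exp.2 (hbound s hs))
    _ ≤ ∫⁻ s in Ioi t, ENNReal.ofReal (Real.exp (c * s)) :=
        lintegral_mono_set fun _ hs ↦ hb.trans_lt hs.1

theorem ofReal_exp_mul_le_setLIntegral_Ioi_of_monotoneOn {g : ℝ → ℝ≥0∞} {a t : ℝ}
    (hg : MonotoneOn g (Ioi a)) (hat : a < t) (c : ℝ) :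
    ENNReal.ofReal (Real.exp (c * (t + 1))) * g t ≤
      ∫⁻ s in Ioi a, ENNReal.ofReal (Real.exp (c * s)) * g s :=
  calc ENNReal.ofReal (Real.exp (c * (t + 1))) * g t
      ≤ (∫⁻ s in Ioi t, ENNReal.ofReal (Real.exp (c * s))) * g t := by
        gcongr
        exact ofReal_exp_le_setLIntegral_Ioi c t
    _ = ∫⁻ s in Ioi t, ENNReal.ofReal (Real.exp (c * s)) * g t :=
        (lintegral_mul_const _ (by fun_prop)).symm
    _ ≤ ∫⁻ s in Ioi t, ENNReal.ofReal (Real.exp (c * s)) * g s :=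
        setLIntegral_mono' measurableSet_Ioi fun s hs ↦ by
          gcongr
          exact hg hat (hat.trans hs) (le_of_lt hs)
    _ ≤ ∫⁻ s in Ioi a, ENNReal.ofReal (Real.exp (c * s)) * g s :=
        lintegral_mono_set (Ioi_subset_Ioi hat.le)

theorem expNegE_bot (lam : ℝ) : expNegE lam ⊥ = ∞ := if_pos rfl

theorem expNegE_eq_exp {lam : ℝ} (hlam : 0 < lam) {a : EReal} (ha : a ≠ ⊤) :
    expNegE lam a = EReal.exp (-(lam * a)) := by
  induction a with
  | bot => simp [expNegE_bot, EReal.coe_mul_bot_of_pos hlam]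
  | coe r => simp [expNegE, ← EReal.coe_mul, ← EReal.coe_neg]
  | top => exact absurd rfl ha

theorem expNegE_le_iff {lam : ℝ} (hlam : 0 < lam) {a : EReal} (ha : a ≠ ⊤) {J : ℝ≥0∞} :
    expNegE lam a ≤ J ↔ -J.log / lam ≤ a := by
  rw [expNegE_eq_exp hlam ha, EReal.div_le_iff_le_mul (EReal.coe_pos.2 hlam) (EReal.coe_ne_top lam),
    EReal.neg_le, ← EReal.exp_le_exp_iff, ENNReal.exp_log]

theorem legendreT_ne_top {X : Type*} (u : ℝ → X → ℝ) (τ : ℝ) (x : X) : legendreT u τ x ≠ ⊤ :=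
  ne_top_of_le_ne_top (EReal.coe_ne_top _) (iInf₂_le 1 one_pos)

theorem expNegE_legendreT_le_iff {X : Type*} {u : ℝ → X → ℝ} {x : X} {lam τ : ℝ}
    (hlam : 0 < lam) {J : ℝ≥0∞} :
    expNegE lam (legendreT u τ x) ≤ J ↔
      ∀ t, 0 < t → ENNReal.ofReal (Real.exp (-lam * (u t x - τ * t))) ≤ J := by
  rw [expNegE_le_iff hlam (legendreT_ne_top u τ x), legendreT, le_iInf₂_iff]
  refine forall₂_congr fun t _ ↦ ?_
  rw [← expNegE_le_iff hlam (EReal.coe_ne_top _), expNegE, if_neg (EReal.coe_ne_bot _),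
    EReal.toReal_coe]

theorem expNegE_legendreT_le_lintegral {X : Type*} {u : ℝ → X → ℝ} {x : X} {lam : ℝ}
    (hlam : 0 < lam) (p : ℝ) (hmono : AntitoneOn (fun t ↦ u t x) (Ioi 0)) :
    expNegE lam (legendreT u p x) ≤ ENNReal.ofReal (Real.exp (-(lam * p))) *
      ∫⁻ t in Ioi (0 : ℝ), ENNReal.ofReal (Real.exp (lam * p * t)) *
        ENNReal.ofReal (Real.exp (-lam * u t x)) := by
  refine (expNegE_legendreT_le_iff hlam).2 fun t ht ↦ ?_
  have h_weight : MonotoneOn (fun s ↦ ENNReal.ofReal (Real.exp (-lam * u s x))) (Ioi 0) :=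
    fun s hs r hr hsr ↦ ENNReal.ofReal_le_ofReal <| Real.exp_le_exp.2 <|
      mul_le_mul_of_nonpos_left (hmono hs hr hsr) (neg_nonpos.2 hlam.le)
  calc ENNReal.ofReal (Real.exp (-lam * (u t x - p * t)))
      = ENNReal.ofReal (Real.exp (-(lam * p))) *
          (ENNReal.ofReal (Real.exp (lam * p * (t + 1))) *
            ENNReal.ofReal (Real.exp (-lam * u t x))) := by
        simp only [← ENNReal.ofReal_mul (Real.exp_pos _).le, ← Real.exp_add]
        ring_nf
    _ ≤ _ := by
        gcongr
        exact ofReal_exp_mul_le_setLIntegral_Ioi_of_monotoneOn h_weight ht (lam * p)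

theorem lintegral_setLIntegral_exp_le_swap {X : Type*} [MeasurableSpace X] (μ : Measure X)
    (lam p : ℝ) {u : ℝ → X → ℝ} (hu : Measurable fun q : ℝ × X ↦ u q.1 q.2) :
    ∫⁻ x, (∫⁻ t in Ioi (0 : ℝ), ENNReal.ofReal (Real.exp (lam * p * t)) *
        ENNReal.ofReal (Real.exp (-lam * u t x))) ∂μ ≤
      ∫⁻ t in Ioi (0 : ℝ), ENNReal.ofReal (Real.exp (lam * p * t)) *
        ∫⁻ x, ENNReal.ofReal (Real.exp (-lam * u t x)) ∂μ := by
  simp_rw [← lintegral_const_mul' _ _ ENNReal.ofReal_ne_top]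
  refine lintegral_lintegral_le_swap_of_ne_zero _ μ (by fun_prop) ?_
  exact ae_of_all _ fun t ↦ ae_of_all _ fun x ↦ by simp [Real.exp_pos]

theorem stmt2_general {X : Type*} [MeasurableSpace X] (μ : Measure X)
    (lam p : ℝ) (hlam : 0 < lam)
    (u : ℝ → X → ℝ) (hu : Measurable fun q : ℝ × X => u q.1 q.2)
    (hmono : ∀ x, AntitoneOn (fun t => u t x) (Set.Ioi (0 : ℝ))) :
    (∫⁻ x, expNegE lam (legendreT u p x) ∂μ) ≤
      ENNReal.ofReal (Real.exp (-(lam * p))) *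
        ∫⁻ t in Set.Ioi (0 : ℝ),
          ENNReal.ofReal (Real.exp (lam * p * t)) *
            ∫⁻ x, ENNReal.ofReal (Real.exp (-lam * u t x)) ∂μ ∧
    ((∫⁻ t in Set.Ioi (0 : ℝ),
        ENNReal.ofReal (Real.exp (lam * p * t)) *
          ∫⁻ x, ENNReal.ofReal (Real.exp (-lam * u t x)) ∂μ) < ⊤ →
      (∀ᵐ x ∂μ, legendreT u p x ≠ ⊥) ∧
        (∫⁻ x, expNegE lam (legendreT u p x) ∂μ) < ⊤) := by
  set G : X → ℝ≥0∞ := fun x ↦ ∫⁻ t in Ioi (0 : ℝ), ENNReal.ofReal (Real.exp (lam * p * t)) *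
    ENNReal.ofReal (Real.exp (-lam * u t x))
  have h_pointwise : ∀ x, expNegE lam (legendreT u p x) ≤
      ENNReal.ofReal (Real.exp (-(lam * p))) * G x :=
    fun x ↦ expNegE_legendreT_le_lintegral hlam p (hmono x)
  have hG_le := lintegral_setLIntegral_exp_le_swap μ lam p hu
  have hG_meas : Measurable G := by
    refine Measurable.lintegral_prod_left' (f := fun q : ℝ × X ↦
      ENNReal.ofReal (Real.exp (lam * p * q.1)) * ENNReal.ofReal (Real.exp (-lam * u q.1 q.2))) ?_
    fun_prop
  have h_bound :=
    calc ∫⁻ x, expNegE lam (legendreT u p x) ∂μ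
        ≤ ∫⁻ x, ENNReal.ofReal (Real.exp (-(lam * p))) * G x ∂μ := lintegral_mono h_pointwise
      _ = ENNReal.ofReal (Real.exp (-(lam * p))) * ∫⁻ x, G x ∂μ :=
          lintegral_const_mul _ hG_meas
      _ ≤ _ := mul_le_mul_right hG_le _
  refine ⟨h_bound, fun h_fin ↦
    ⟨?_, h_bound.trans_lt (ENNReal.mul_lt_top ENNReal.ofReal_lt_top h_fin)⟩⟩
  filter_upwards [ae_lt_top hG_meas (hG_le.trans_lt h_fin).ne] with x hx h_bot
  have h_lt_top : expNegE lam (legendreT u p x) < ∞ :=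
    (h_pointwise x).trans_lt (ENNReal.mul_lt_top ENNReal.ofReal_lt_top hx)
  exact h_lt_top.ne (h_bot ▸ expNegE_bot lam)

/-- Let `μ` be a measure on `X`, `λ > 0`, `p ≤ 0`, and let `u : (0,∞) × X → ℝ` be measurable
with `t ↦ u(t,x)` nonincreasing for every `x`.  Then
`∫_X exp(−λ·û_p) dμ ≤ e^{−λp} · ∫_0^∞ e^{λpt} (∫_X exp(−λ·u(t,·)) dμ) dt`,
all integrals taken in `[0,∞]`.  In particular, if the right-hand double integral is finite
then `û_p > −∞` μ-a.e. and `∫_X exp(−λ·û_p) dμ < ∞`. -/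
theorem stmt2 {X : Type*} [MeasurableSpace X] (μ : Measure X)
    (lam p : ℝ) (hlam : 0 < lam) (hp : p ≤ 0)
    (u : ℝ → X → ℝ) (hu : Measurable fun q : ℝ × X => u q.1 q.2)
    (hmono : ∀ x, AntitoneOn (fun t => u t x) (Set.Ioi (0 : ℝ))) :
    (∫⁻ x, expNegE lam (legendreT u p x) ∂μ) ≤
      ENNReal.ofReal (Real.exp (-(lam * p))) *
        ∫⁻ t in Set.Ioi (0 : ℝ),
          ENNReal.ofReal (Real.exp (lam * p * t)) *
            ∫⁻ x, ENNReal.ofReal (Real.exp (-lam * u t x)) ∂μ ∧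
    ((∫⁻ t in Set.Ioi (0 : ℝ),
        ENNReal.ofReal (Real.exp (lam * p * t)) *
          ∫⁻ x, ENNReal.ofReal (Real.exp (-lam * u t x)) ∂μ) < ⊤ →
      (∀ᵐ x ∂μ, legendreT u p x ≠ ⊥) ∧
        (∫⁻ x, expNegE lam (legendreT u p x) ∂μ) < ⊤) :=
  stmt2_general μ lam p hlam u hu hmono
end
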